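/- Let Ω be a nonempty open subset of ℂ. Then the set S_p \ S_uc is spaceable in H(Ω)^ℕ: there exists a closed infinite-dimensional vector subspace M of H(Ω)^ℕ such that M \ {0} ⊆ S_p \ S_uc. -/

import Mathlib

open Filter Topology

set_option synthInstance.maxHeartbeats 1000000
set_option maxHeartbeats 1000000

noncomputable section

/-- The subalgebra of `C(Ω, ℂ)` consisting of (restrictions to `Ω` of) functions
holomorphic on `Ω`. -/
def Hol (Ω : Set ℂ) : Subalgebra ℂ C(Ω, ℂ) where
  carrier := {f | ∃ g : ℂ → ℂ, DifferentiableOn ℂ g Ω ∧ ∀ z : Ω, f z = g z}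
  mul_mem' := by
    rintro f₁ f₂ ⟨g₁, hg₁, he₁⟩ ⟨g₂, hg₂, he₂⟩
    exact ⟨g₁ * g₂, hg₁.mul hg₂, fun z => by simp [he₁ z, he₂ z]⟩
  add_mem' := by
    rintro f₁ f₂ ⟨g₁, hg₁, he₁⟩ ⟨g₂, hg₂, he₂⟩
    exact ⟨g₁ + g₂, hg₁.add hg₂, fun z => by simp [he₁ z, he₂ z]⟩
  algebraMap_mem' := fun c => ⟨fun _ => c, differentiableOn_const c, fun _ => rfl⟩

/-- The space `H(Ω)^ℕ` of sequences of holomorphic functions on `Ω`, with the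
product topology (each factor carrying the compact-open topology). -/
abbrev HSeq (Ω : Set ℂ) := ℕ → Hol Ω

/-- Sequences tending to `0` pointwise on `Ω`. -/
def Sp (Ω : Set ℂ) : Set (HSeq Ω) :=
  {F | ∀ z : Ω, Tendsto (fun n => (F n : C(Ω, ℂ)) z) atTop (𝓝 0)}

/-- Sequences tending to `0` uniformly on each compact subset of `Ω`. -/
def Suc (Ω : Set ℂ) : Set (HSeq Ω) :=
  {F | ∀ K : Set Ω, IsCompact K →
    TendstoUniformlyOn (fun n (z : Ω) => (F n : C(Ω, ℂ)) z) 0 atTop K}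

/-- Sequences tending to `0` uniformly on `Ω`. -/
def Su (Ω : Set ℂ) : Set (HSeq Ω) :=
  {F | TendstoUniformly (fun n (z : Ω) => (F n : C(Ω, ℂ)) z) 0 atTop}

/-- Restriction of a holomorphic function on `Ω₂` to a subset `Ω₁ ⊆ Ω₂`. -/
def holRestrict {Ω₁ Ω₂ : Set ℂ} (h : Ω₁ ⊆ Ω₂) (f : Hol Ω₂) : Hol Ω₁ := by
  refine ⟨(f : C(Ω₂, ℂ)).comp ⟨Set.inclusion h, continuous_inclusion h⟩, ?_⟩
  obtain ⟨g, hg, he⟩ := f.2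
  exact ⟨g, hg.mono h, fun z => he ⟨z, h z.2⟩⟩

end

open Polynomial in
/-- A pole can be pushed to infinity: if `a` lies in a connected unbounded set disjoint from the
compact set `K`, then some polynomial takes the value `1` at `a` and is small on `K`. -/
lemma exists_polynomial_eval_eq_one_norm_le {K V : Set ℂ} (hK : IsCompact K) {a : ℂ}
    (hV : IsPreconnected V) (haV : a ∈ V) (hVK : V ⊆ Kᶜ) (hVb : ¬ Bornology.IsBounded V)
    {ε : ℝ} (hε : 0 < ε) :
    ∃ p : ℂ[X], p.eval a = 1 ∧ ∀ z ∈ K, ‖p.eval z‖ ≤ ε := by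
  have : CompactSpace K := isCompact_iff_compactSpace.mp hK
  let S : Subalgebra ℂ C(K, ℂ) := (polynomialFunctions K).topologicalClosure
  have hS : IsClosed (S : Set C(K, ℂ)) := Subalgebra.isClosed_topologicalClosure _
  have hXS : (X : ℂ[X]).toContinuousMapOn K ∈ S :=
    Subalgebra.le_topologicalClosure _ ⟨X, trivial, rfl⟩
  let x : S := ⟨(X : ℂ[X]).toContinuousMapOn K, hXS⟩
  have hspec : spectrum ℂ (x : C(K, ℂ)) = K := by
    rw [ContinuousMap.spectrum_eq_range]
    ext z
    simp [x]
  have hmem : a ∉ spectrum ℂ x := by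
    intro h
    have hb := Subalgebra.spectrum_isBounded_connectedComponentIn S x h
    rw [hspec] at hb
    exact hVb (hb.subset (hV.subset_connectedComponentIn haV hVK))
  obtain ⟨u, hu⟩ := spectrum.notMem_iff.mp hmem
  have hinv (z : K) : (a - z) * ((↑u⁻¹ : S) : C(K, ℂ)) z = 1 := by
    have h1 : ((algebraMap ℂ S a - x) * ↑u⁻¹ : S) = 1 := by rw [← hu]; simp
    have h2 := congrArg (fun s : S => (s : C(K, ℂ)) z) h1
    simpa [x] using h2
  obtain ⟨R, hR0, hR⟩ : ∃ R : ℝ, 0 < R ∧ ∀ z ∈ K, ‖a - z‖ ≤ R := by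
    obtain ⟨R, hR⟩ := hK.isBounded.subset_closedBall a
    refine ⟨max R 1, by positivity, fun z hz => ?_⟩
    have := hR hz
    rw [Metric.mem_closedBall, dist_comm, dist_eq_norm] at this
    exact this.trans (le_max_left _ _)
  have hcl : ((↑u⁻¹ : S) : C(K, ℂ)) ∈ closure (polynomialFunctions K : Set C(K, ℂ)) :=
    (↑u⁻¹ : S).2
  obtain ⟨_, ⟨q, -, rfl⟩, hq⟩ := Metric.mem_closure_iff.mp hcl (ε / R) (by positivity)
  refine ⟨1 - (C a - X) * q, by simp, fun z hz => ?_⟩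
  have hd : ‖((↑u⁻¹ : S) : C(K, ℂ)) ⟨z, hz⟩ - q.eval z‖ ≤ ε / R := by
    have := (ContinuousMap.dist_apply_le_dist (⟨z, hz⟩ : K)).trans hq.le
    rw [dist_eq_norm] at this
    simpa using this
  have heq : (1 - (C a - X) * q).eval z
      = (a - z) * (((↑u⁻¹ : S) : C(K, ℂ)) ⟨z, hz⟩ - q.eval z) := by
    rw [mul_sub, hinv ⟨z, hz⟩]
    simp
  rw [heq, norm_mul]
  calc _ ≤ R * (ε / R) := by gcongr; exact hR z hz
    _ = ε := by field_simp

open Polynomial in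
/-- There is a sequence of polynomials tending to `0` pointwise on `ℂ` and growing faster than any
power of `n` along a sequence of points at distance `1 / (n + 1)` from the origin. -/
lemma exists_polynomial_seq_tendsto_zero_eval_eq_pow :
    ∃ p : ℕ → ℂ[X], (∀ z, Tendsto (fun n => (p n).eval z) atTop (𝓝 0)) ∧
      ∀ n : ℕ, (p n).eval (Complex.I / (n + 1)) = (n + 1) ^ n := by
  let V (n : ℕ) : Set ℂ := Complex.im ⁻¹' Set.Ioo 0 (2 / (n + 1))
  let K (n : ℕ) : Set ℂ := Metric.closedBall 0 n \ V n
  have him (n : ℕ) : (Complex.I / (n + 1)).im = 1 / (n + 1) := by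
    have : (Complex.I / (n + 1)) = ((1 / (n + 1) : ℝ) : ℂ) * Complex.I := by push_cast; ring
    rw [this, Complex.im_ofReal_mul, Complex.I_im, mul_one]
  have key (n : ℕ) : ∃ p : ℂ[X], p.eval (Complex.I / (n + 1)) = 1 ∧
      ∀ z ∈ K n, ‖p.eval z‖ ≤ ((n + 1 : ℝ) ^ (n + 1))⁻¹ := by
    refine exists_polynomial_eval_eq_one_norm_le (V := V n) ?_ ?_ ?_ ?_ ?_ (by positivity)
    · exact (isCompact_closedBall _ _).diff (isOpen_Ioo.preimage Complex.continuous_im)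
    · exact ((convex_Ioo _ _).linear_preimage Complex.imLm).isPreconnected
    · rw [Set.mem_preimage, him]
      constructor
      · positivity
      · gcongr; norm_num
    · exact fun z hz hzK => hzK.2 hz
    · intro hb
      obtain ⟨R, hR⟩ := hb.subset_closedBall 0
      have hmem : ((|R| + 1 : ℝ) + ((1 / (n + 1) : ℝ) : ℂ) * Complex.I) ∈ V n := by
        simp only [V, Set.mem_preimage, Complex.add_im, Complex.ofReal_im, Complex.im_ofReal_mul,
          Complex.I_im, mul_one, zero_add]
        constructor
        · positivity
        · gcongr; norm_num
      have h1 := hR hmem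
      rw [mem_closedBall_zero_iff] at h1
      have h2 := (Complex.re_le_norm _).trans h1
      simp at h2
      linarith [le_abs_self R]
  choose p hp1 hp2 using key
  refine ⟨fun n => C ((n + 1 : ℂ) ^ n) * p n, fun z => ?_, fun n => by simp [hp1]⟩
  have hzK : ∀ᶠ n in atTop, z ∈ K n := by
    have h1 : ∀ᶠ n : ℕ in atTop, ‖z‖ ≤ n := tendsto_natCast_atTop_atTop.eventually_ge_atTop _
    have h2 : ∀ᶠ n : ℕ in atTop, z ∉ V n := by
      rcases le_or_gt z.im 0 with h | h
      · exact .of_forall fun n hn => h.not_gt hn.1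
      · have : Tendsto (fun n : ℕ => 2 * (1 / ((n : ℝ) + 1))) atTop (𝓝 (2 * 0)) :=
          tendsto_one_div_add_atTop_nhds_zero_nat.const_mul 2
        rw [mul_zero] at this
        filter_upwards [this.eventually_lt_const h] with n hn hz
        have := hz.2
        rw [mul_one_div] at hn
        linarith
    filter_upwards [h1, h2] with n hn1 hn2
    exact ⟨by simpa using hn1, hn2⟩
  refine squeeze_zero_norm' ?_ tendsto_one_div_add_atTop_nhds_zero_nat
  filter_upwards [hzK] with n hn
  have hc : ‖(n + 1 : ℂ)‖ = n + 1 := by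
    exact_mod_cast Complex.norm_natCast (n + 1)
  rw [eval_mul, eval_C, norm_mul, norm_pow, hc]
  calc _ ≤ (n + 1 : ℝ) ^ n * ((n + 1 : ℝ) ^ (n + 1))⁻¹ := by gcongr; exact hp2 n z hn
    _ = 1 / (n + 1) := by rw [pow_succ]; field_simp

/-- If a holomorphic germ `h` does not vanish identically near `z₀`, then it decays at most like a
power of the distance to `z₀`. -/
lemma AnalyticAt.exists_pow_le_norm {h : ℂ → ℂ} {z₀ : ℂ} (hh : AnalyticAt ℂ h z₀)
    (h0 : ¬ ∀ᶠ z in 𝓝 z₀, h z = 0) :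
    ∃ k : ℕ, ∃ c > 0, ∀ᶠ z in 𝓝 z₀, c * ‖z - z₀‖ ^ k ≤ ‖h z‖ := by
  obtain ⟨k, g, hg, hg0, heq⟩ := hh.exists_eventuallyEq_pow_smul_nonzero_iff.mpr h0
  have hpos : 0 < ‖g z₀‖ := norm_pos_iff.mpr hg0
  refine ⟨k, ‖g z₀‖ / 2, half_pos hpos, ?_⟩
  filter_upwards [heq, hg.continuousAt.norm.eventually_const_lt (half_lt_self hpos)] with z hz hgz
  rw [hz, smul_eq_mul, norm_mul, norm_pow, mul_comm]
  gcongr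

/-- An entire function restricted to a connected component of `Ω` and extended by zero is
holomorphic on `Ω`. -/
lemma differentiableOn_indicator_connectedComponentIn {Ω : Set ℂ} (hΩ : IsOpen Ω) (z₀ : ℂ)
    {g : ℂ → ℂ} (hg : Differentiable ℂ g) :
    DifferentiableOn ℂ ((connectedComponentIn Ω z₀).indicator g) Ω := by
  intro z hz
  apply DifferentiableAt.differentiableWithinAt
  have hnhds (w : ℂ) (hw : w ∈ Ω) : connectedComponentIn Ω w ∈ 𝓝 w :=
    hΩ.connectedComponentIn.mem_nhds (mem_connectedComponentIn hw)
  by_cases hzC : z ∈ connectedComponentIn Ω z₀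
  · refine (hg z).congr_of_eventuallyEq ?_
    filter_upwards [hΩ.connectedComponentIn.mem_nhds hzC] with w hw
    exact Set.indicator_of_mem hw g
  · refine (differentiableAt_const (0 : ℂ)).congr_of_eventuallyEq ?_
    filter_upwards [hnhds z hz] with w hw
    refine Set.indicator_of_notMem (fun hw' => hzC ?_) g
    rw [connectedComponentIn_eq hw', ← connectedComponentIn_eq hw]
    exact mem_connectedComponentIn hz

/-- The holomorphic function on `Ω` given by the restriction of `g`. -/
def Hol.ofDifferentiableOn {Ω : Set ℂ} (g : ℂ → ℂ) (hg : DifferentiableOn ℂ g Ω) : Hol Ω :=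
  ⟨⟨Ω.domRestrict g, hg.continuousOn.domRestrict⟩, g, hg, fun _ => rfl⟩

lemma Hol.continuous_eval {Ω : Set ℂ} (z : Ω) : Continuous fun f : Hol Ω => (f : C(Ω, ℂ)) z :=
  (continuous_eval_const z).comp continuous_subtype_val

/-- The sequences `(h, f₀ h, f₁ h, …)`, where `h` is holomorphic on `Ω` and vanishes outside `C`. -/
def multiplesSubmodule {Ω : Set ℂ} (f : HSeq Ω) (C : Set ℂ) : Submodule ℂ (HSeq Ω) where
  carrier := {F | (∀ n (z : Ω), (F (n + 1) : C(Ω, ℂ)) z = (f n : C(Ω, ℂ)) z * (F 0 : C(Ω, ℂ)) z) ∧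
    ∀ z : Ω, (z : ℂ) ∉ C → (F 0 : C(Ω, ℂ)) z = 0}
  add_mem' := by
    rintro F G ⟨hF, hF'⟩ ⟨hG, hG'⟩
    exact ⟨fun n z => by simp [hF, hG, mul_add], fun z hz => by simp [hF' z hz, hG' z hz]⟩
  zero_mem' := by simp
  smul_mem' := by
    rintro c F ⟨hF, hF'⟩
    exact ⟨fun n z => by simp [hF, mul_left_comm], fun z hz => by simp [hF' z hz]⟩

lemma isClosed_multiplesSubmodule {Ω : Set ℂ} (f : HSeq Ω) (C : Set ℂ) :
    IsClosed (multiplesSubmodule f C : Set (HSeq Ω)) := by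
  have hcont (n : ℕ) (z : Ω) : Continuous fun F : HSeq Ω => (F n : C(Ω, ℂ)) z :=
    (Hol.continuous_eval z).comp (continuous_apply n)
  have : (multiplesSubmodule f C : Set (HSeq Ω)) =
      {F | ∀ n (z : Ω), (F (n + 1) : C(Ω, ℂ)) z = (f n : C(Ω, ℂ)) z * (F 0 : C(Ω, ℂ)) z} ∩
      {F | ∀ z : Ω, (z : ℂ) ∉ C → (F 0 : C(Ω, ℂ)) z = 0} := rfl
  rw [this]
  simp only [Set.ofPred_forall]
  exact (isClosed_iInter fun n => isClosed_iInter fun z =>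
      isClosed_eq (hcont _ z) ((hcont 0 z).const_mul _)).inter
    (isClosed_iInter fun z => isClosed_iInter fun _ => isClosed_eq (hcont 0 z) continuous_const)

lemma not_finite_multiplesSubmodule {Ω : Set ℂ} (hΩ : IsOpen Ω) {z₀ : ℂ} (hz₀ : z₀ ∈ Ω)
    (f : HSeq Ω) :
    ¬ Module.Finite ℂ (multiplesSubmodule f (connectedComponentIn Ω z₀)) := by
  set C := connectedComponentIn Ω z₀
  let e (p : Polynomial ℂ) : Hol Ω := Hol.ofDifferentiableOn (C.indicator fun z => p.eval z)
    (differentiableOn_indicator_connectedComponentIn hΩ z₀ p.differentiable)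
  have he (p : Polynomial ℂ) (z : Ω) : (e p : C(Ω, ℂ)) z = C.indicator (fun z => p.eval z) z := rfl
  let L : Polynomial ℂ →ₗ[ℂ] multiplesSubmodule f C :=
    { toFun := fun p => ⟨fun n => Nat.casesOn n (e p) fun m => f m * e p,
        fun n z => rfl, fun z hz => (he p z).trans (Set.indicator_of_notMem hz _)⟩
      map_add' := fun p q => by
        have h : e (p + q) = e p + e q := by
          ext z
          by_cases hz : (z : ℂ) ∈ C <;> simp [he, hz]
        ext n z
        cases n <;> simp [h, mul_add]
      map_smul' := fun c p => by
        have h : e (c • p) = c • e p := by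
          ext z
          by_cases hz : (z : ℂ) ∈ C <;> simp [he, hz]
        ext n z
        cases n <;> simp [h] }
  have hL : Function.Injective L := by
    refine (injective_iff_map_eq_zero L).mpr fun p hp => ?_
    have hep : e p = 0 := congrFun (congrArg Subtype.val hp) 0
    have hC : C ∈ 𝓝 z₀ := hΩ.connectedComponentIn.mem_nhds (mem_connectedComponentIn hz₀)
    refine p.eq_zero_of_infinite_isRoot ((infinite_of_mem_nhds z₀ hC).mono fun z hz => ?_)
    have := he p ⟨z, connectedComponentIn_subset _ _ hz⟩
    rw [hep, Set.indicator_of_mem hz] at this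
    exact this.symm
  intro hfin
  let _ : AddCommGroup (multiplesSubmodule f C) :=
    Submodule.addCommGroup (M := HSeq Ω) (multiplesSubmodule f C)
  have := isNoetherian_of_isNoetherianRing_of_finite ℂ (multiplesSubmodule f C)
  exact Polynomial.not_finite (R := ℂ) (Module.Finite.of_injective L hL)

/-- `S_p \ S_uc` is spaceable in `H(Ω)^ℕ`. -/
theorem Sp_diff_Suc_spaceable
    (Ω : Set ℂ) (hΩ : IsOpen Ω) (hne : Ω.Nonempty) :
    ∃ M : Submodule ℂ (HSeq Ω),
      IsClosed (M : Set (HSeq Ω)) ∧ ¬ Module.Finite ℂ M ∧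
      (M : Set (HSeq Ω)) \ {0} ⊆ Sp Ω \ Suc Ω := by
  obtain ⟨z₀, hz₀⟩ := hne
  obtain ⟨p, hp0, hp⟩ := exists_polynomial_seq_tendsto_zero_eval_eq_pow
  let f : HSeq Ω := fun n => Hol.ofDifferentiableOn (fun z => (p n).eval (z - z₀))
    ((p n).differentiable.comp (differentiable_id.sub_const z₀)).differentiableOn
  have hf (n : ℕ) (z : Ω) : (f n : C(Ω, ℂ)) z = (p n).eval (z - z₀) := rfl
  refine ⟨multiplesSubmodule f (connectedComponentIn Ω z₀), isClosed_multiplesSubmodule _ _,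
    not_finite_multiplesSubmodule hΩ hz₀ f, ?_⟩
  rintro F ⟨⟨hF, hFC⟩, hF0⟩
  constructor
  · intro z
    rw [← tendsto_add_atTop_iff_nat 1]
    simp only [hF, hf]
    simpa using (hp0 (z - z₀)).mul_const ((F 0 : C(Ω, ℂ)) z)
  · intro huc
    obtain ⟨h, hh, hFh⟩ := (F 0).2
    have hana := hh.analyticOnNhd hΩ
    have hne0 : ¬ ∀ᶠ z in 𝓝 z₀, h z = 0 := by
      intro hev
      have hzero := (hana.mono (connectedComponentIn_subset Ω z₀))
        |>.eqOn_zero_of_preconnected_of_eventuallyEq_zero isPreconnected_connectedComponentIn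
          (mem_connectedComponentIn hz₀) hev
      have h0 (z : Ω) : (F 0 : C(Ω, ℂ)) z = 0 := by
        by_cases hz : (z : ℂ) ∈ connectedComponentIn Ω z₀
        · rw [hFh]; exact hzero hz
        · exact hFC z hz
      apply hF0
      rw [Set.mem_singleton_iff]
      ext n z
      cases n <;> simp [hF, h0]
    obtain ⟨k, c, hc, hlow⟩ := (hana z₀ hz₀).exists_pow_le_norm hne0
    obtain ⟨r, hr, hrΩ⟩ := Metric.nhds_basis_closedBall.mem_iff.mp (hΩ.mem_nhds hz₀)
    have hK : IsCompact (Subtype.val ⁻¹' Metric.closedBall z₀ r : Set Ω) := by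
      rw [Subtype.isCompact_iff, Subtype.image_preimage_coe, Set.inter_eq_right.mpr hrΩ]
      exact isCompact_closedBall _ _
    have hunif := (tendsto_add_atTop_nat 1).eventually
      (Metric.tendstoUniformlyOn_iff.mp (huc _ hK) c hc)
    have ha : Tendsto (fun n : ℕ => z₀ + Complex.I / (n + 1)) atTop (𝓝 z₀) := by
      have h1 := (tendsto_one_div_add_atTop_nhds_zero_nat (𝕜 := ℂ)).const_mul Complex.I
      simpa [div_eq_mul_inv] using h1.const_add z₀
    obtain ⟨n, hn, hnr, hnlow, hkn⟩ := (hunif.and ((ha.eventually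
      (Metric.closedBall_mem_nhds z₀ hr)).and ((ha.eventually hlow).and
        (eventually_ge_atTop k)))).exists
    have hlt := hn ⟨_, hrΩ hnr⟩ hnr
    have hnorm : ‖(n + 1 : ℂ)‖ = n + 1 := by exact_mod_cast Complex.norm_natCast (n + 1)
    rw [hF, hf, hFh, Pi.zero_apply, dist_zero_left, norm_mul] at hlt
    simp only [add_sub_cancel_left, hp, norm_pow, norm_div, Complex.norm_I, hnorm] at hlt hnlow
    refine hlt.not_ge ?_
    calc c ≤ c * (n + 1 : ℝ) ^ (n - k) :=
          le_mul_of_one_le_right hc.le (one_le_pow₀ (by linarith [n.cast_nonneg (α := ℝ)]))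
      _ = (n + 1 : ℝ) ^ n * (c * (1 / (n + 1)) ^ k) := by
          rw [← pow_sub_mul_pow (n + 1 : ℝ) hkn, one_div, inv_pow]
          field_simp
      _ ≤ _ := by gcongr
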